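/- For every f : {0,1}^n → ℝ, with E(f,f) = E_x Σ_{i=1}^n (f(x) − f(x⊕e_i))² the Dirichlet form and d_1, …, d_n the martingale differences of f, one has E(f,f) ≥ 2 · Σ_{i=1}^n Ent(d_i²). -/

import Mathlib

/-!
The Dirichlet form is additive over the martingale differences, `E(f,f) = ∑ i, E(d_i,d_i)`, and the
theorem is the logarithmic Sobolev inequality `E(g,g) ≥ 2 Ent(g²)` applied to each `g = d_i`.

Additivity: flipping coordinate `i` turns `f_i = f_{i-1} + d_i` into `f_{i-1} - d_i` and preserves
the Dirichlet form, so the parallelogram law gives `E(f_i,f_i) = E(f_{i-1},f_{i-1}) + E(d_i,d_i)`.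

The logarithmic Sobolev inequality goes by induction on the dimension. Splitting the cube into two
opposite facets, the step is the two-point inequality applied to the `L²` norms of the restrictions
of `g`, together with the reverse triangle inequality in `L²`.
-/

open Finset

/-- Expectation with respect to the uniform measure on the discrete cube `{0,1}^n`. -/
noncomputable def cubeE {n : ℕ} (f : (Fin n → Bool) → ℝ) : ℝ :=
  (∑ x : Fin n → Bool, f x) / 2 ^ n

/-- `x ⊕ e_i` : flip the `i`-th coordinate of `x`. -/
def flipAt {n : ℕ} (x : Fin n → Bool) (i : Fin n) : Fin n → Bool :=
  Function.update x i (!x i)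

/-- Influence of the `i`-th variable of a Boolean function,
`I_i(f) = Pr_x[f(x) ≠ f(x ⊕ e_i)]` under the uniform measure. -/
noncomputable def infl {n : ℕ} (f : (Fin n → Bool) → Bool) (i : Fin n) : ℝ :=
  cubeE (fun x => if f x ≠ f (flipAt x i) then 1 else 0)

/-- Expectation of a Boolean function under the uniform measure. -/
noncomputable def meanB {n : ℕ} (f : (Fin n → Bool) → Bool) : ℝ :=
  cubeE (fun x => if f x then 1 else 0)

/-- Conditional expectation given the first `j` coordinates: `condE f j x` is the
average of `f` over all `y` agreeing with `x` in the first `j` coordinates. -/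
noncomputable def condE {n : ℕ} (f : (Fin n → Bool) → ℝ) (j : ℕ) (x : Fin n → Bool) : ℝ :=
  (∑ y : Fin n → Bool, if ∀ k : Fin n, (k : ℕ) < j → y k = x k then f y else 0) / 2 ^ (n - j)

/-- The Dirichlet form `E(f,f) = E_x Σ_i (f(x) - f(x ⊕ e_i))²`. -/
noncomputable def energy {n : ℕ} (f : (Fin n → Bool) → ℝ) : ℝ :=
  cubeE (fun x => ∑ i : Fin n, (f x - f (flipAt x i)) ^ 2)

/-- Entropy of a nonnegative function: `Ent(g) = E[g log g] - E g · log E g`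
(the convention `0 log 0 = 0` holds since `Real.log 0 = 0`). -/
noncomputable def ent {n : ℕ} (g : (Fin n → Bool) → ℝ) : ℝ :=
  cubeE (fun x => g x * Real.log (g x)) - cubeE g * Real.log (cubeE g)

section Expectation

variable {n : ℕ} (f g : (Fin n → Bool) → ℝ)

lemma cubeE_add : cubeE (f + g) = cubeE f + cubeE g := by
  simp only [cubeE, Pi.add_apply, sum_add_distrib, add_div]

lemma cubeE_const_smul (c : ℝ) : cubeE (c • f) = c * cubeE f := by
  simp only [cubeE, Pi.smul_apply, smul_eq_mul, ← mul_sum, mul_div_assoc]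

lemma cubeE_sq_nonneg : 0 ≤ cubeE (f ^ 2) :=
  div_nonneg (sum_nonneg fun _ _ => sq_nonneg _) (by positivity)

lemma cubeE_mul_le_sqrt_mul_sqrt : cubeE (f * g) ≤ √(cubeE (f ^ 2)) * √(cubeE (g ^ 2)) := by
  simp only [cubeE, Pi.mul_apply, Pi.pow_apply]
  rw [Real.sqrt_div' _ (by positivity), Real.sqrt_div' _ (by positivity), div_mul_div_comm,
    Real.mul_self_sqrt (by positivity)]
  gcongr
  exact Real.sum_mul_le_sqrt_mul_sqrt ..

lemma sq_sqrt_cubeE_sq_sub_le :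
    (√(cubeE (f ^ 2)) - √(cubeE (g ^ 2))) ^ 2 ≤ cubeE ((f - g) ^ 2) := by
  have sq_expand : (f - g) ^ 2 = f ^ 2 + g ^ 2 + (-2 : ℝ) • (f * g) := by
    rw [neg_smul, two_smul]
    ring
  have expand : cubeE ((f - g) ^ 2) = cubeE (f ^ 2) + cubeE (g ^ 2) - 2 * cubeE (f * g) := by
    rw [sq_expand, cubeE_add, cubeE_add, cubeE_const_smul]
    ring
  rw [expand, sub_sq, Real.sq_sqrt (cubeE_sq_nonneg f), Real.sq_sqrt (cubeE_sq_nonneg g)]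
  linarith [cubeE_mul_le_sqrt_mul_sqrt f g]

end Expectation

section Flip

variable {n : ℕ}

lemma flipAt_involutive (i : Fin n) : Function.Involutive (flipAt · i) := fun x => by
  simp [flipAt]

lemma flipAt_comm (x : Fin n → Bool) (i j : Fin n) :
    flipAt (flipAt x i) j = flipAt (flipAt x j) i := by
  obtain rfl | hij := eq_or_ne i j
  · rfl
  · simp only [flipAt, Function.update_of_ne hij, Function.update_of_ne hij.symm]
    exact Function.update_comm hij ..

lemma cubeE_comp_flipAt (f : (Fin n → Bool) → ℝ) (i : Fin n) :
    cubeE (fun x => f (flipAt x i)) = cubeE f :=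
  congrArg (· / 2 ^ n) (Equiv.sum_comp (flipAt_involutive i).toPerm f)

lemma energy_comp_flipAt (f : (Fin n → Bool) → ℝ) (i : Fin n) :
    energy (fun x => f (flipAt x i)) = energy f := by
  simp only [energy, flipAt_comm _ _ i]
  exact cubeE_comp_flipAt (fun x => ∑ j, (f x - f (flipAt x j)) ^ 2) i

lemma energy_parallelogram (f g : (Fin n → Bool) → ℝ) :
    energy (f + g) + energy (f - g) = 2 * (energy f + energy g) := by
  simp only [energy, ← cubeE_add, ← cubeE_const_smul]
  congr 1
  ext x
  simp only [Pi.add_apply, Pi.sub_apply, Pi.smul_apply, smul_eq_mul, ← sum_add_distrib, mul_sum]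
  exact sum_congr rfl fun i _ => by ring

end Flip

section Martingale

variable {n : ℕ} (f : (Fin n → Bool) → ℝ)

/-- The martingale differences of `f` along the coordinate filtration. Coordinates are indexed
from `0`, so `martingaleDiff f i` is `d_{i+1} = f_{i+1} - f_i`. -/
noncomputable def martingaleDiff (i : ℕ) : (Fin n → Bool) → ℝ :=
  condE f (i + 1) - condE f i

lemma condE_eq_self : condE f n = f := by
  ext x
  simp [condE, ← funext_iff]

lemma energy_condE_zero : energy (condE f 0) = 0 := by
  simp [energy, condE, cubeE]

lemma condE_eq_average (i : Fin n) (x : Fin n → Bool) :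
    condE f i x = (condE f (i + 1) x + condE f (i + 1) (flipAt x i)) / 2 := by
  have agree_succ (y z : Fin n → Bool) : (∀ k : Fin n, (k : ℕ) < i + 1 → y k = z k) ↔
      (∀ k : Fin n, (k : ℕ) < i → y k = z k) ∧ y i = z i := by
    simp only [Nat.lt_succ_iff_lt_or_eq, or_imp, forall_and, Fin.val_inj, forall_eq]
  have agree_flipAt (y : Fin n → Bool) : (∀ k : Fin n, (k : ℕ) < i → y k = flipAt x i k) ↔
      ∀ k : Fin n, (k : ℕ) < i → y k = x k :=
    forall₂_congr fun k hk => by rw [flipAt, Function.update_of_ne (Fin.ne_of_lt hk)]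
  have split_sum : (∑ y, if ∀ k : Fin n, (k : ℕ) < i → y k = x k then f y else 0) =
      (∑ y, if ∀ k : Fin n, (k : ℕ) < i + 1 → y k = x k then f y else 0) +
        ∑ y, if ∀ k : Fin n, (k : ℕ) < i + 1 → y k = flipAt x i k then f y else 0 := by
    rw [← sum_add_distrib]
    refine sum_congr rfl fun y _ => ?_
    have flip_self : flipAt x i i = !x i := Function.update_self ..
    simp only [agree_succ, agree_flipAt, flip_self]
    cases y i <;> cases x i <;> simp
  rw [condE, split_sum, condE, condE, show n - (i : ℕ) = n - (i + 1) + 1 by lia, pow_succ]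
  ring

lemma condE_succ_flipAt (i : Fin n) (x : Fin n → Bool) :
    condE f (i + 1) (flipAt x i) = condE f i x - martingaleDiff f i x := by
  rw [martingaleDiff, Pi.sub_apply, condE_eq_average]
  ring

lemma energy_condE_succ (i : Fin n) :
    energy (condE f (i + 1)) = energy (condE f i) + energy (martingaleDiff f i) := by
  have flipped : energy (condE f i - martingaleDiff f i) = energy (condE f (i + 1)) :=
    calc energy (condE f i - martingaleDiff f i)
        = energy (fun x => condE f (i + 1) (flipAt x i)) :=
          congrArg energy (funext fun x => (condE_succ_flipAt f i x).symm)
      _ = energy (condE f (i + 1)) := energy_comp_flipAt _ i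
  have parallelogram := energy_parallelogram (condE f i) (martingaleDiff f i)
  rw [flipped, martingaleDiff, add_sub_cancel] at parallelogram
  rw [martingaleDiff]
  linarith

theorem energy_eq_sum_energy_martingaleDiff :
    energy f = ∑ i : Fin n, energy (martingaleDiff f i) := by
  calc energy f = energy (condE f n) - energy (condE f 0) := by
        rw [condE_eq_self, energy_condE_zero, sub_zero]
    _ = ∑ i : Fin n, (energy (condE f (i + 1)) - energy (condE f i)) := by
        rw [Fin.sum_univ_eq_sum_range fun i => energy (condE f (i + 1)) - energy (condE f i),
          sum_range_sub fun i => energy (condE f i)]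
    _ = ∑ i : Fin n, energy (martingaleDiff f i) :=
        sum_congr rfl fun i _ => sub_eq_of_eq_add' (energy_condE_succ f i)

end Martingale

section TwoPoint

/-- The deficit `E(g,g) - 2 Ent(g²)` of the logarithmic Sobolev inequality on `{0,1}`, for the
function `g` with values `a` and `b`. -/
noncomputable def twoPointDeficit (a b : ℝ) : ℝ :=
  (a - b) ^ 2 - (a ^ 2 * Real.log (a ^ 2) + b ^ 2 * Real.log (b ^ 2)
    - 2 * ((a ^ 2 + b ^ 2) / 2 * Real.log ((a ^ 2 + b ^ 2) / 2)))

lemma twoPointDeficit_comm (a b : ℝ) : twoPointDeficit a b = twoPointDeficit b a := by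
  rw [twoPointDeficit, twoPointDeficit, add_comm (b ^ 2)]
  ring

lemma twoPointDeficit_self (a : ℝ) : twoPointDeficit a a = 0 := by
  rw [twoPointDeficit, add_self_div_two]
  ring

lemma twoPointDeficit_abs_abs_le (a b : ℝ) : twoPointDeficit |a| |b| ≤ twoPointDeficit a b := by
  simp only [twoPointDeficit, sq_abs]
  gcongr ?_ - _
  exact sq_le_sq.2 (abs_abs_sub_abs_le_abs_sub a b)

lemma continuous_twoPointDeficit (a : ℝ) : Continuous (twoPointDeficit a) := by
  have continuous_comp {u : ℝ → ℝ} (hu : Continuous u) :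
      Continuous fun t => u t * Real.log (u t) := Real.continuous_mul_log.comp hu
  exact ((continuous_const.sub continuous_id).pow 2).sub
    ((continuous_const.add (continuous_comp (by fun_prop))).sub
      ((continuous_comp (by fun_prop)).const_mul 2))

lemma hasDerivAt_twoPointDeficit (a : ℝ) {b : ℝ} (hb : 0 < b) :
    HasDerivAt (twoPointDeficit a)
      (2 * (b * (Real.log ((a ^ 2 + b ^ 2) / 2) - Real.log (b ^ 2)) - (a - b))) b := by
  have hasDerivAt_sq : HasDerivAt (fun t : ℝ => t ^ 2) (2 * b) b := by
    simpa using hasDerivAt_pow 2 b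
  have hasDerivAt_mean : HasDerivAt (fun t : ℝ => (a ^ 2 + t ^ 2) / 2) (2 * b / 2) b :=
    (hasDerivAt_sq.const_add _).div_const 2
  have hasDerivAt_left := ((hasDerivAt_id b).const_sub a).pow 2
  have hasDerivAt_sq_log := (Real.hasDerivAt_mul_log (x := b ^ 2) (by positivity)).comp b
    hasDerivAt_sq
  have hasDerivAt_mean_log := (Real.hasDerivAt_mul_log (x := (a ^ 2 + b ^ 2) / 2)
    (by positivity)).comp b hasDerivAt_mean
  refine (hasDerivAt_left.sub ((hasDerivAt_sq_log.const_add _).sub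
    (hasDerivAt_mean_log.const_mul 2))).congr_deriv ?_
  simp only [id_eq]
  ring

-- With `a / b = 1 + s`, exponentiating turns this into `1 + s + s ^ 2 / 2 ≤ exp s`.
lemma mul_log_average_sq_sub_log_sq_le {a b : ℝ} (hb : 0 < b) (hba : b ≤ a) :
    b * (Real.log ((a ^ 2 + b ^ 2) / 2) - Real.log (b ^ 2)) ≤ a - b := by
  have exp_bound := Real.quadratic_le_exp_of_nonneg (sub_nonneg.2 ((one_le_div hb).2 hba))
  have ratio : (a ^ 2 + b ^ 2) / 2 / b ^ 2 = 1 + (a / b - 1) + (a / b - 1) ^ 2 / 2 := by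
    field_simp
    ring
  have log_bound : Real.log ((a ^ 2 + b ^ 2) / 2) - Real.log (b ^ 2) ≤ a / b - 1 := by
    rw [← Real.log_div (by positivity) (by positivity), Real.log_le_iff_le_exp (by positivity),
      ratio]
    exact exp_bound
  calc b * (Real.log ((a ^ 2 + b ^ 2) / 2) - Real.log (b ^ 2)) ≤ b * (a / b - 1) := by gcongr
    _ = a - b := by field_simp

lemma antitoneOn_twoPointDeficit (a : ℝ) : AntitoneOn (twoPointDeficit a) (Set.Icc 0 a) := by
  refine antitoneOn_of_hasDerivWithinAt_nonpos (convex_Icc 0 a)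
    (continuous_twoPointDeficit a).continuousOn
    (fun b hb => (hasDerivAt_twoPointDeficit a ?_).hasDerivWithinAt) fun b hb => ?_
  all_goals rw [interior_Icc] at hb
  · exact hb.1
  · linarith [mul_log_average_sq_sub_log_sq_le hb.1 hb.2.le]

theorem twoPointDeficit_nonneg (a b : ℝ) : 0 ≤ twoPointDeficit a b := by
  wlog hba : |b| ≤ |a| generalizing a b
  · exact twoPointDeficit_comm a b ▸ this b a (le_of_not_ge hba)
  calc 0 = twoPointDeficit |a| |a| := (twoPointDeficit_self _).symm
    _ ≤ twoPointDeficit |a| |b| := antitoneOn_twoPointDeficit |a| ⟨abs_nonneg b, hba⟩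
        ⟨abs_nonneg a, le_rfl⟩ hba
    _ ≤ twoPointDeficit a b := twoPointDeficit_abs_abs_le a b

end TwoPoint

section Faces

variable {n : ℕ}

/-- The restriction of `f` to the facet of the cube on which the first coordinate is `b`, as a
function of the remaining coordinates. -/
def face (f : (Fin (n + 1) → Bool) → ℝ) (b : Bool) : (Fin n → Bool) → ℝ :=
  fun x => f (Fin.cons b x)

lemma flipAt_cons_zero (b : Bool) (x : Fin n → Bool) :
    flipAt (Fin.cons b x) 0 = Fin.cons (!b) x := by
  rw [flipAt, Fin.cons_zero, Fin.update_cons_zero]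

lemma flipAt_cons_succ (b : Bool) (x : Fin n → Bool) (i : Fin n) :
    flipAt (Fin.cons b x) i.succ = Fin.cons b (flipAt x i) := by
  rw [flipAt, Fin.cons_succ, ← Fin.cons_update, flipAt]

variable (f : (Fin (n + 1) → Bool) → ℝ)

lemma cubeE_eq_average_face : cubeE f = (cubeE (face f true) + cubeE (face f false)) / 2 := by
  have sum_split : ∑ x, f x = ∑ x, face f true x + ∑ x, face f false x := by
    rw [← (Fin.consEquiv fun _ : Fin (n + 1) => Bool).sum_comp, Fintype.sum_prod_type,
      Fintype.sum_bool]
    rfl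
  rw [cubeE, sum_split, cubeE, cubeE]
  ring

lemma energy_eq_average_face_add :
    energy f = (energy (face f true) + energy (face f false)) / 2 +
      cubeE ((face f true - face f false) ^ 2) := by
  have energy_density (b : Bool) :
      face (fun x => ∑ i, (f x - f (flipAt x i)) ^ 2) b =
        (face f true - face f false) ^ 2 +
          fun x => ∑ i, (face f b x - face f b (flipAt x i)) ^ 2 := by
    ext x
    simp only [face, Pi.add_apply, Pi.pow_apply, Pi.sub_apply, Fin.sum_univ_succ,
      flipAt_cons_zero, flipAt_cons_succ]
    cases b
    · rw [Bool.not_false, sub_sq_comm]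
    · rw [Bool.not_true]
  rw [energy, cubeE_eq_average_face, energy_density, energy_density, cubeE_add, cubeE_add,
    energy, energy]
  ring

lemma ent_eq_average_face_add :
    ent f = (ent (face f true) + ent (face f false)) / 2 +
      ((cubeE (face f true) * Real.log (cubeE (face f true)) +
        cubeE (face f false) * Real.log (cubeE (face f false))) / 2 -
          cubeE f * Real.log (cubeE f)) := by
  have face_mul_log (b : Bool) : face (fun x => f x * Real.log (f x)) b =
      fun x => face f b x * Real.log (face f b x) := rfl
  rw [ent, cubeE_eq_average_face fun x => f x * Real.log (f x), face_mul_log, face_mul_log, ent,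
    ent]
  ring

end Faces

theorem two_mul_ent_sq_le_energy {n : ℕ} (g : (Fin n → Bool) → ℝ) :
    2 * ent (g ^ 2) ≤ energy g := by
  induction n with
  | zero => simp [ent, energy, cubeE]
  | succ n ih =>
    have face_sq (b : Bool) : face (g ^ 2) b = face g b ^ 2 := rfl
    have two_point :=
      twoPointDeficit_nonneg √(cubeE (face g true ^ 2)) √(cubeE (face g false ^ 2))
    rw [twoPointDeficit, Real.sq_sqrt (cubeE_sq_nonneg _), Real.sq_sqrt (cubeE_sq_nonneg _)]
      at two_point
    have minkowski := sq_sqrt_cubeE_sq_sub_le (face g true) (face g false)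
    rw [energy_eq_average_face_add, ent_eq_average_face_add, cubeE_eq_average_face (g ^ 2),
      face_sq, face_sq]
    linarith [ih (face g true), ih (face g false)]

/-- A martingale form of the logarithmic Sobolev inequality on the cube: for every
`f : {0,1}^n → ℝ` with martingale differences `d_i = f_i - f_{i-1}`,
`E(f,f) ≥ 2 · Σ_i Ent(d_i²)`. -/
theorem energy_ge_two_sum_ent_sq_differences {n : ℕ} (f : (Fin n → Bool) → ℝ) :
    energy f ≥ 2 * ∑ i : Fin n,
      ent (fun x => (condE f ((i : ℕ) + 1) x - condE f (i : ℕ) x) ^ 2) := by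
  calc 2 * ∑ i : Fin n, ent (martingaleDiff f i ^ 2)
      = ∑ i : Fin n, 2 * ent (martingaleDiff f i ^ 2) := mul_sum ..
    _ ≤ ∑ i : Fin n, energy (martingaleDiff f i) :=
        sum_le_sum fun _ _ => two_mul_ent_sq_le_energy _
    _ = energy f := (energy_eq_sum_energy_martingaleDiff f).symm
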